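/- Let H ⊆ binom([n],3) be a 2-resilient 3-graph with matching number 2 such that there exist disjoint edges A, B ∈ H for which both {F ∈ H : F ∩ A = ∅} and {F ∈ H : F ∩ B = ∅} are stars (all edges in each family share a common vertex). Then |H| ≤ 56. -/

import Mathlib

/-- The matching number of a hypergraph: the largest size of a set of
pairwise disjoint edges. -/
noncomputable def matchingNumber (H : Finset (Finset ℕ)) : ℕ :=
  sSup {m | ∃ M : Finset (Finset ℕ), M ⊆ H ∧ M.card = m ∧
    (M : Set (Finset ℕ)).PairwiseDisjoint id}

/-- A hypergraph is `t`-resilient if deleting any set of at most `t`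
vertices does not decrease its matching number. -/
def Resilient (t : ℕ) (H : Finset (Finset ℕ)) : Prop :=
  ∀ T : Finset ℕ, T.card ≤ t →
    matchingNumber (H.filter fun F => Disjoint F T) = matchingNumber H

/-- `S 0, …, S (r-1)` form a pseudo sunflower with center `C`:
the `S i` are distinct, `C` is a proper subset of one of them, and the
sets `S i \ C` are pairwise disjoint. -/
def IsPseudoSunflower {r : ℕ} (S : Fin r → Finset ℕ) (C : Finset ℕ) : Prop :=
  Function.Injective S ∧ (∃ i, C ⊂ S i) ∧
    ∀ i j, i ≠ j → Disjoint (S i \ C) (S j \ C)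

/-- The covering (transversal) number of a hypergraph. -/
noncomputable def coverNumber (H : Finset (Finset ℕ)) : ℕ :=
  sInf {m | ∃ Y : Finset ℕ, Y.card = m ∧ ∀ F ∈ H, (F ∩ Y).Nonempty}

/-!
Let `a ∈ A` and `b ∈ B` be the centres of the two stars. Resilience at `{a, b}` gives disjoint
edges `C`, `D` avoiding both, and `A ∪ B ∪ C ∪ D` has eight vertices. Since no three edges are
pairwise disjoint, every edge meets these eight vertices in one of `48` triples or `16` pairs.

A pair extended by an outer vertex forces the inner edges missing it to intersect, so by
Erdős–Ko–Rado there are at most `10` of them; by resilience a pair has at most two extensions.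
If some pair has two, resilience at it yields three pairwise disjoint extended pairs, leaving at
most `38` inner edges, while `C` and `D` limit the edges leaving the eight vertices to `18`. If
every pair has at most one extension, the two counts are at most `40 + 16` or `48 + 8`.
-/

open Finset

section Matching

theorem bddAbove_card_matching (H : Finset (Finset ℕ)) :
    BddAbove {m | ∃ M : Finset (Finset ℕ), M ⊆ H ∧ #M = m ∧
      (M : Set (Finset ℕ)).PairwiseDisjoint id} := by
  refine ⟨#H, ?_⟩
  rintro m ⟨M, hM, rfl, -⟩
  exact card_le_card hM

theorem card_le_matchingNumber {H M : Finset (Finset ℕ)} (hM : M ⊆ H)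
    (hd : (M : Set (Finset ℕ)).PairwiseDisjoint id) : #M ≤ matchingNumber H :=
  le_csSup (bddAbove_card_matching H) ⟨M, hM, rfl, hd⟩

theorem exists_matching_card_eq_matchingNumber (H : Finset (Finset ℕ)) :
    ∃ M ⊆ H, #M = matchingNumber H ∧ (M : Set (Finset ℕ)).PairwiseDisjoint id :=
  Nat.sSup_mem (s := {m | ∃ M ⊆ H, #M = m ∧ (M : Set (Finset ℕ)).PairwiseDisjoint id})
    ⟨0, ∅, by simp⟩ (bddAbove_card_matching H)

/-- No three edges of the hypergraph are pairwise disjoint. For nonempty edges this says that the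
matching number is at most two, over an arbitrary vertex type. -/
def NoThreeDisjoint {α : Type*} (H : Finset (Finset α)) : Prop :=
  ∀ ⦃E F G⦄, E ∈ H → F ∈ H → G ∈ H → Disjoint E F → Disjoint E G → ¬ Disjoint F G

/-- Any `t` vertices are avoided by two disjoint edges. This is the content of `t`-resilience for
hypergraphs of matching number two, over an arbitrary vertex type. -/
def HasDisjointPairAvoiding {α : Type*} (t : ℕ) (H : Finset (Finset α)) : Prop :=
  ∀ T : Finset α, #T ≤ t → ∃ E ∈ H, ∃ F ∈ H, Disjoint E F ∧ Disjoint E T ∧ Disjoint F T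

theorem noThreeDisjoint_of_matchingNumber_le_two {H : Finset (Finset ℕ)} (h0 : ∅ ∉ H)
    (hν : matchingNumber H ≤ 2) : NoThreeDisjoint H := by
  intro E F G hE hF hG hEF hEG hFG
  have ne_of_disjoint {X Y : Finset ℕ} (hX : X ∈ H) (hXY : Disjoint X Y) : X ≠ Y := by
    rintro rfl
    exact h0 (disjoint_self_iff_empty X |>.1 hXY ▸ hX)
  have hcard : #{E, F, G} = 3 :=
    card_eq_three.2 ⟨E, F, G, ne_of_disjoint hE hEF, ne_of_disjoint hE hEG,
      ne_of_disjoint hF hFG, rfl⟩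
  have hsub : {E, F, G} ⊆ H := by simp [insert_subset_iff, hE, hF, hG]
  have hdisj : (({E, F, G} : Finset (Finset ℕ)) : Set (Finset ℕ)).PairwiseDisjoint id := by
    simp [Set.pairwiseDisjoint_insert, hEF, hEG, hFG]
  have := card_le_matchingNumber hsub hdisj
  omega

theorem Resilient.hasDisjointPairAvoiding {t : ℕ} {H : Finset (Finset ℕ)} (hres : Resilient t H)
    (hν : 2 ≤ matchingNumber H) : HasDisjointPairAvoiding t H := by
  intro T hT
  obtain ⟨M, hMH, hcard, hd⟩ := exists_matching_card_eq_matchingNumber {F ∈ H | Disjoint F T}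
  obtain ⟨E, hE, F, hF, hne⟩ := one_lt_card.1 (show 1 < #M by rw [hcard, hres T hT]; omega)
  obtain ⟨hEH, hET⟩ := mem_filter.1 (hMH hE)
  obtain ⟨hFH, hFT⟩ := mem_filter.1 (hMH hF)
  exact ⟨E, hEH, F, hFH, hd hE hF hne, hET, hFT⟩

end Matching

section Trace

variable {ι α : Type*}

/-- The trace of `F` on the vertices labelled by `V`, recorded as a set of labels. -/
noncomputable def edgeTrace (V : ι ↪ α) (F : Finset α) : Finset ι :=
  F.preimage V V.injective.injOn

@[simp]
theorem mem_edgeTrace {V : ι ↪ α} {F : Finset α} {i : ι} : i ∈ edgeTrace V F ↔ V i ∈ F :=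
  mem_preimage

@[simp]
theorem edgeTrace_map (V : ι ↪ α) (T : Finset ι) : edgeTrace V (T.map V) = T := by
  ext i
  simp

theorem disjoint_edgeTrace_iff {V : ι ↪ α} {F : Finset α} {T : Finset ι} :
    Disjoint (edgeTrace V F) T ↔ Disjoint F (T.map V) := by
  simp [disjoint_right]

theorem disjoint_edgeTrace {V : ι ↪ α} {E F : Finset α} (h : Disjoint E F) :
    Disjoint (edgeTrace V E) (edgeTrace V F) := by
  rw [disjoint_left] at h ⊢
  exact fun i hE hF => h (mem_edgeTrace.1 hE) (mem_edgeTrace.1 hF)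

theorem map_edgeTrace_subset (V : ι ↪ α) (F : Finset α) : (edgeTrace V F).map V ⊆ F := by
  simp [map_subset_iff_subset_preimage, edgeTrace]

theorem map_edgeTrace_of_subset_range {V : ι ↪ α} {F : Finset α}
    (h : ∀ z ∈ F, z ∈ Set.range V) : (edgeTrace V F).map V = F := by
  refine (map_edgeTrace_subset V F).antisymm fun z hz => ?_
  obtain ⟨i, rfl⟩ := h z hz
  exact mem_map_of_mem V (mem_edgeTrace.2 hz)

theorem notMem_map_of_notMem_range {V : ι ↪ α} {z : α} (hz : z ∉ Set.range V) (T : Finset ι) :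
    z ∉ T.map V := by
  intro h
  obtain ⟨i, -, rfl⟩ := mem_map.1 h
  exact hz ⟨i, rfl⟩

theorem eq_insert_map_edgeTrace [DecidableEq α] {V : ι ↪ α} {F : Finset α} {z : α}
    (hF : #F ≤ #(edgeTrace V F) + 1) (hz : z ∈ F) (hzV : z ∉ Set.range V) :
    F = insert z ((edgeTrace V F).map V) := by
  refine (eq_of_subset_of_card_le (insert_subset hz (map_edgeTrace_subset V F)) ?_).symm
  rwa [card_insert_of_notMem (notMem_map_of_notMem_range hzV _), card_map]

theorem card_edgeTrace_add_one {V : ι ↪ α} {F : Finset α} {z : α}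
    (hF : #F ≤ #(edgeTrace V F) + 1) (hz : z ∈ F) (hzV : z ∉ Set.range V) :
    #(edgeTrace V F) + 1 = #F := by
  classical
  conv_rhs => rw [eq_insert_map_edgeTrace hF hz hzV,
    card_insert_of_notMem (notMem_map_of_notMem_range hzV _), card_map]

theorem eq_of_mem_of_notMem_range {V : ι ↪ α} {F : Finset α} {y z : α}
    (hF : #F ≤ #(edgeTrace V F) + 1) (hy : y ∈ F) (hz : z ∈ F)
    (hyV : y ∉ Set.range V) (hzV : z ∉ Set.range V) : y = z := by
  classical
  rw [eq_insert_map_edgeTrace hF hz hzV, mem_insert] at hy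
  exact hy.resolve_right (notMem_map_of_notMem_range hyV _)

/-- The edges all of whose vertices are labelled, recorded as sets of labels. -/
noncomputable def innerEdges (H : Finset (Finset α)) (V : ι ↪ α) : Finset (Finset ι) :=
  H.preimage (Finset.map V) (map_injective V).injOn

@[simp]
theorem mem_innerEdges {H : Finset (Finset α)} {V : ι ↪ α} {T : Finset ι} :
    T ∈ innerEdges H V ↔ T.map V ∈ H :=
  mem_preimage

variable [DecidableEq α]

theorem card_le_choose_of_intersecting {s : Finset α} {𝒜 : Finset (Finset α)} {r : ℕ}
    (h𝒜 : 𝒜 ⊆ s.powersetCard r) (hI : (𝒜 : Set (Finset α)).Intersecting) (hr : r ≤ #s / 2) :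
    #𝒜 ≤ (#s - 1).choose (r - 1) := by
  let V : Fin #s ↪ α := s.equivFin.symm.toEmbedding.trans (.subtype _)
  have map_trace {F} (hF : F ∈ 𝒜) : (edgeTrace V F).map V = F :=
    map_edgeTrace_of_subset_range fun z hz =>
      ⟨s.equivFin ⟨z, (mem_powersetCard.1 (h𝒜 hF)).1 hz⟩, by simp [V]⟩
  have hinj : Set.InjOn (edgeTrace V) (𝒜 : Set (Finset α)) := fun F hF G hG h => by
    rw [← map_trace hF, h, map_trace hG]
  have hmaps : Set.MapsTo (edgeTrace V) (𝒜 : Set (Finset α)) (innerEdges 𝒜 V) := fun F hF =>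
    mem_innerEdges.2 ((map_trace hF).symm ▸ hF)
  refine (card_le_card_of_injOn _ hmaps hinj).trans (erdos_ko_rado ?_ ?_ hr)
  · intro S hS T hT hST
    exact hI (mem_innerEdges.1 hS) (mem_innerEdges.1 hT) ((disjoint_map V).2 hST)
  · intro T hT
    simpa using (mem_powersetCard.1 (h𝒜 (mem_innerEdges.1 hT))).2

open Classical in
/-- The link of the label set `e` outside the labelled vertices: the unlabelled vertices that
extend `e` to an edge. -/
noncomputable def outerLink (H : Finset (Finset α)) (V : ι ↪ α) (e : Finset ι) : Finset α :=
  {z ∈ H.biUnion id | z ∉ Set.range V ∧ insert z (e.map V) ∈ H}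

theorem mem_outerLink {H : Finset (Finset α)} {V : ι ↪ α} {e : Finset ι} {z : α} :
    z ∈ outerLink H V e ↔ z ∉ Set.range V ∧ insert z (e.map V) ∈ H := by
  simp only [outerLink, mem_filter, and_iff_right_iff_imp]
  exact fun h => mem_biUnion.2 ⟨_, h.2, mem_insert_self _ _⟩

theorem mem_outerLink_edgeTrace {H : Finset (Finset α)} {V : ι ↪ α} {F : Finset α} {z : α}
    (hFH : F ∈ H) (hF : #F ≤ #(edgeTrace V F) + 1) (hz : z ∈ F) (hzV : z ∉ Set.range V) :
    z ∈ outerLink H V (edgeTrace V F) :=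
  mem_outerLink.2 ⟨hzV, eq_insert_map_edgeTrace hF hz hzV ▸ hFH⟩

theorem card_le_card_innerEdges_add_sum_outerLink {H : Finset (Finset α)} {V : ι ↪ α}
    {P : Finset (Finset ι)} (hT : ∀ F ∈ H, #F ≤ #(edgeTrace V F) + 1)
    (hP : ∀ F ∈ H, #(edgeTrace V F) + 1 = #F → edgeTrace V F ∈ P) :
    #H ≤ #(innerEdges H V) + ∑ e ∈ P, #(outerLink H V e) := by
  have hcover : H ⊆ (innerEdges H V).image (Finset.map V) ∪
      P.biUnion fun e => (outerLink H V e).image fun z => insert z (e.map V) := by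
    intro F hF
    by_cases hV : ∀ z ∈ F, z ∈ Set.range V
    · have hFV := map_edgeTrace_of_subset_range hV
      exact mem_union_left _ (mem_image.2 ⟨_, mem_innerEdges.2 (hFV.symm ▸ hF), hFV⟩)
    · push Not at hV
      obtain ⟨z, hz, hzV⟩ := hV
      refine mem_union_right _ (mem_biUnion.2 ⟨_, hP F hF ?_, mem_image.2 ⟨z, ?_, ?_⟩⟩)
      · exact card_edgeTrace_add_one (hT F hF) hz hzV
      · exact mem_outerLink_edgeTrace hF (hT F hF) hz hzV
      · exact (eq_insert_map_edgeTrace (hT F hF) hz hzV).symm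
  calc #H ≤ _ := card_le_card hcover
    _ ≤ _ := card_union_le _ _
    _ ≤ _ := Nat.add_le_add card_image_le
      (card_biUnion_le.trans (sum_le_sum fun e _ => card_image_le))

end Trace

section Disjointness

variable {ι α : Type*} [DecidableEq α] {H : Finset (Finset α)} {V : ι ↪ α}

theorem intersecting_innerEdges_disjoint [DecidableEq ι] {e : Finset ι}
    (hM : NoThreeDisjoint H) (he : (outerLink H V e).Nonempty) :
    {T | T ∈ innerEdges H V ∧ Disjoint T e}.Intersecting := by
  obtain ⟨z, hz⟩ := he
  obtain ⟨hzV, hzH⟩ := mem_outerLink.1 hz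
  have disjoint_extension {T : Finset ι} (h : Disjoint T e) :
      Disjoint (T.map V) (insert z (e.map V)) :=
    disjoint_insert_right.2 ⟨notMem_map_of_notMem_range hzV T, (disjoint_map V).2 h⟩
  rintro S ⟨hS, hSe⟩ T ⟨hT, hTe⟩ hST
  exact hM (mem_innerEdges.1 hS) (mem_innerEdges.1 hT) hzH ((disjoint_map V).2 hST)
    (disjoint_extension hSe) (disjoint_extension hTe)

theorem eq_of_mem_outerLink_of_disjoint {e f T : Finset ι} {y z : α} (hM : NoThreeDisjoint H)
    (hT : T ∈ innerEdges H V) (hTe : Disjoint T e) (hTf : Disjoint T f) (hef : Disjoint e f)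
    (hy : y ∈ outerLink H V e) (hz : z ∈ outerLink H V f) : y = z := by
  obtain ⟨hyV, hyH⟩ := mem_outerLink.1 hy
  obtain ⟨hzV, hzH⟩ := mem_outerLink.1 hz
  by_contra hyz
  refine hM (mem_innerEdges.1 hT) hyH hzH ?_ ?_ ?_ <;>
    simp only [disjoint_insert_left, disjoint_insert_right, disjoint_map, mem_insert, not_or,
      notMem_map_of_notMem_range hyV, notMem_map_of_notMem_range hzV, Ne.symm hyz, hTe, hTf,
      hef, not_false_eq_true, and_self]

theorem exists_disjoint_pair_outerLink_subset {t : ℕ} {e : Finset ι} (hM : NoThreeDisjoint H)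
    (hR : HasDisjointPairAvoiding t H) (he : #e ≤ t) :
    ∃ E ∈ H, ∃ F ∈ H, Disjoint E F ∧ Disjoint E (e.map V) ∧ Disjoint F (e.map V) ∧
      outerLink H V e ⊆ E ∪ F := by
  obtain ⟨E, hE, F, hF, hEF, hEe, hFe⟩ := hR (e.map V) (by rwa [card_map])
  refine ⟨E, hE, F, hF, hEF, hEe, hFe, fun z hz => ?_⟩
  by_contra hzEF
  rw [mem_union, not_or] at hzEF
  exact hM hE hF (mem_outerLink.1 hz).2 hEF (disjoint_insert_right.2 ⟨hzEF.1, hEe⟩)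
    (disjoint_insert_right.2 ⟨hzEF.2, hFe⟩)

theorem card_outerLink_le_two_of_card_le {t : ℕ} {e : Finset ι} (hM : NoThreeDisjoint H)
    (hR : HasDisjointPairAvoiding t H) (hT : ∀ F ∈ H, #F ≤ #(edgeTrace V F) + 1) (he : #e ≤ t) :
    #(outerLink H V e) ≤ 2 := by
  obtain ⟨E, hE, F, hF, -, -, -, hsub⟩ :=
    exists_disjoint_pair_outerLink_subset (V := V) hM hR he
  have card_inter_le_one {G : Finset α} (hG : G ∈ H) : #(outerLink H V e ∩ G) ≤ 1 := by
    refine card_le_one.2 fun y hy z hz => ?_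
    rw [mem_inter, mem_outerLink] at hy hz
    exact eq_of_mem_of_notMem_range (hT G hG) hy.2 hz.2 hy.1.1 hz.1.1
  calc #(outerLink H V e) = #(outerLink H V e ∩ E ∪ outerLink H V e ∩ F) := by
        rw [← inter_union_distrib_left, inter_eq_left.2 hsub]
    _ ≤ #(outerLink H V e ∩ E) + #(outerLink H V e ∩ F) := card_union_le _ _
    _ ≤ 2 := Nat.add_le_add (card_inter_le_one hE) (card_inter_le_one hF)

theorem exists_disjoint_edges_separating {t : ℕ} {e : Finset ι} {x y : α} (hM : NoThreeDisjoint H)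
    (hR : HasDisjointPairAvoiding t H) (hT : ∀ F ∈ H, #F ≤ #(edgeTrace V F) + 1) (he : #e ≤ t)
    (hx : x ∈ outerLink H V e) (hy : y ∈ outerLink H V e) (hxy : x ≠ y) :
    ∃ E ∈ H, ∃ F ∈ H, Disjoint E F ∧ Disjoint E (e.map V) ∧ Disjoint F (e.map V) ∧
      x ∈ E ∧ y ∈ F := by
  obtain ⟨E, hE, F, hF, hEF, hEe, hFe, hsub⟩ :=
    exists_disjoint_pair_outerLink_subset (V := V) hM hR he
  have not_both {G : Finset α} (hG : G ∈ H) (hxG : x ∈ G) (hyG : y ∈ G) : False :=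
    hxy (eq_of_mem_of_notMem_range (hT G hG) hxG hyG (mem_outerLink.1 hx).1 (mem_outerLink.1 hy).1)
  rcases mem_union.1 (hsub hx) with hxE | hxF <;> rcases mem_union.1 (hsub hy) with hyE | hyF
  · exact (not_both hE hxE hyE).elim
  · exact ⟨E, hE, F, hF, hEF, hEe, hFe, hxE, hyF⟩
  · exact ⟨F, hF, E, hE, hEF.symm, hFe, hEe, hxF, hyE⟩
  · exact (not_both hF hxF hyF).elim

theorem exists_disjoint_edgeTraces_of_mem_outerLink {t : ℕ} {e : Finset ι} {x y : α}
    (hM : NoThreeDisjoint H) (hR : HasDisjointPairAvoiding t H)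
    (hT : ∀ F ∈ H, #F ≤ #(edgeTrace V F) + 1) (he : #e ≤ t)
    (hx : x ∈ outerLink H V e) (hy : y ∈ outerLink H V e) (hxy : x ≠ y) :
    ∃ f g, x ∈ outerLink H V f ∧ y ∈ outerLink H V g ∧
      Disjoint e f ∧ Disjoint e g ∧ Disjoint f g := by
  obtain ⟨E, hE, F, hF, hEF, hEe, hFe, hxE, hyF⟩ :=
    exists_disjoint_edges_separating hM hR hT he hx hy hxy
  exact ⟨edgeTrace V E, edgeTrace V F,
    mem_outerLink_edgeTrace hE (hT E hE) hxE (mem_outerLink.1 hx).1,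
    mem_outerLink_edgeTrace hF (hT F hF) hyF (mem_outerLink.1 hy).1,
    (disjoint_edgeTrace_iff.2 hEe).symm, (disjoint_edgeTrace_iff.2 hFe).symm,
    disjoint_edgeTrace hEF⟩

end Disjointness

section LabelledTraces

/-- Labels of the edge `A`; the centre `a` of the star avoiding `B` has label `0`. -/
abbrev edgeA : Finset (Fin 8) := {0, 1, 2}

/-- Labels of the edge `B`; the centre `b` of the star avoiding `A` has label `3`. -/
abbrev edgeB : Finset (Fin 8) := {3, 4, 5}

/-- Labels of one of the two disjoint edges avoiding both centres. -/
abbrev edgeC : Finset (Fin 8) := {1, 4, 6}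

/-- Labels of the other of the two disjoint edges avoiding both centres. -/
abbrev edgeD : Finset (Fin 8) := {2, 5, 7}

/-- The label sets allowed as traces of edges: those meeting `A ∪ B` and `C ∪ D` and respecting the
two stars. -/
def IsTrace (S : Finset (Fin 8)) : Prop :=
  ¬ Disjoint S (edgeA ∪ edgeB) ∧ ¬ Disjoint S (edgeC ∪ edgeD) ∧
    (Disjoint S edgeA → 3 ∈ S) ∧ (Disjoint S edgeB → 0 ∈ S)

instance : DecidablePred IsTrace := fun _ => inferInstanceAs (Decidable (_ ∧ _))

theorem IsTrace.mono {S T : Finset (Fin 8)} (hS : IsTrace S) (h : S ⊆ T) : IsTrace T :=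
  ⟨fun hT => hS.1 (hT.mono_left h), fun hT => hS.2.1 (hT.mono_left h),
    fun hT => h (hS.2.2.1 (hT.mono_left h)), fun hT => h (hS.2.2.2 (hT.mono_left h))⟩

theorem IsTrace.two_le_card : ∀ {S : Finset (Fin 8)}, IsTrace S → 2 ≤ #S := by
  decide +kernel

/-- The allowed traces with `k` labels. -/
def traces (k : ℕ) : Finset (Finset (Fin 8)) := {S ∈ powersetCard k univ | IsTrace S}

theorem mem_traces {k : ℕ} {S : Finset (Fin 8)} : S ∈ traces k ↔ #S = k ∧ IsTrace S := by
  simp [traces, mem_powersetCard]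

theorem traces_two_eq : traces 2 =
    {{0, 4}, {1, 3}, {0, 5}, {2, 3}, {0, 1}, {3, 4}, {0, 2}, {3, 5},
      {0, 6}, {3, 6}, {0, 7}, {3, 7}, {1, 4}, {1, 5}, {2, 4}, {2, 5}} := by
  decide +kernel

theorem card_traces_two : #(traces 2) = 16 := by
  decide +kernel

theorem card_traces_three : #(traces 3) = 48 := by
  decide +kernel

/-- The three-label traces meeting `e`. -/
def triplesMeeting (e : Finset (Fin 8)) : Finset (Finset (Fin 8)) :=
  {T ∈ traces 3 | ¬ Disjoint T e}

/-- The two-label traces met by at most `30` of the `48` three-label traces. -/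
def sparsePairs : Finset (Finset (Fin 8)) :=
  {e ∈ traces 2 | #(triplesMeeting e) ≤ 30}

theorem card_traces_two_sdiff_sparsePairs : #(traces 2 \ sparsePairs) = 8 := by
  decide +kernel

theorem zero_or_three_mem_of_notMem_sparsePairs :
    ∀ e ∈ traces 2, e ∉ sparsePairs → 0 ∈ e ∨ 3 ∈ e := by
  decide +kernel

theorem mem_sparsePairs_of_pairwise_disjoint {e f g : Finset (Fin 8)} (he : e ∈ traces 2)
    (hf : f ∈ traces 2) (hg : g ∈ traces 2) (hef : Disjoint e f) (heg : Disjoint e g)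
    (hfg : Disjoint f g) : e ∈ sparsePairs ∨ f ∈ sparsePairs ∨ g ∈ sparsePairs := by
  by_contra! hsparse
  have := zero_or_three_mem_of_notMem_sparsePairs e he hsparse.1
  have := zero_or_three_mem_of_notMem_sparsePairs f hf hsparse.2.1
  have := zero_or_three_mem_of_notMem_sparsePairs g hg hsparse.2.2
  rw [disjoint_left] at hef heg hfg
  grind

-- The pairs split into two pentagons `14, 06, 34, 01, 36` and `25, 07, 35, 02, 37` of conflicting
-- pairs (weight at most `5` each), the conflicting pairs `04, 13` and `05, 23`, and `15`, `24`.
theorem sum_traces_two_le_eighteen {c : Finset (Fin 8) → ℕ} (h2 : ∀ e ∈ traces 2, c e ≤ 2)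
    (hc : ∀ e ∈ traces 2, ∀ f ∈ traces 2, Disjoint e f →
      Disjoint edgeC (e ∪ f) ∨ Disjoint edgeD (e ∪ f) → c e + c f ≤ 2) :
    ∑ e ∈ traces 2, c e ≤ 18 := by
  have conflict (e f : Finset (Fin 8)) (h : e ∈ traces 2 ∧ f ∈ traces 2 ∧ Disjoint e f ∧
      (Disjoint edgeC (e ∪ f) ∨ Disjoint edgeD (e ∪ f))) : c e + c f ≤ 2 :=
    hc e h.1 f h.2.1 h.2.2.1 h.2.2.2
  have pentagonC : c {1, 4} + c {0, 6} + c {3, 4} + c {0, 1} + c {3, 6} ≤ 5 := by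
    have := conflict {1, 4} {0, 6} (by decide +kernel)
    have := conflict {0, 6} {3, 4} (by decide +kernel)
    have := conflict {3, 4} {0, 1} (by decide +kernel)
    have := conflict {0, 1} {3, 6} (by decide +kernel)
    have := conflict {3, 6} {1, 4} (by decide +kernel)
    omega
  have pentagonD : c {2, 5} + c {0, 7} + c {3, 5} + c {0, 2} + c {3, 7} ≤ 5 := by
    have := conflict {2, 5} {0, 7} (by decide +kernel)
    have := conflict {0, 7} {3, 5} (by decide +kernel)
    have := conflict {3, 5} {0, 2} (by decide +kernel)
    have := conflict {0, 2} {3, 7} (by decide +kernel)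
    have := conflict {3, 7} {2, 5} (by decide +kernel)
    omega
  have edge04_13 := conflict {0, 4} {1, 3} (by decide +kernel)
  have edge05_23 := conflict {0, 5} {2, 3} (by decide +kernel)
  have pair15 := h2 {1, 5} (by decide +kernel)
  have pair24 := h2 {2, 4} (by decide +kernel)
  rw [traces_two_eq]
  repeat rw [sum_insert (by decide +kernel)]
  rw [sum_singleton]
  omega

end LabelledTraces

section Frame

theorem card_add_card_le_two_of_forall_eq {α : Type*} {s t : Finset α} (hs : #s ≤ 2)
    (ht : #t ≤ 2) (h : ∀ y ∈ s, ∀ z ∈ t, y = z) : #s + #t ≤ 2 := by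
  rcases s.eq_empty_or_nonempty with rfl | ⟨y, hy⟩
  · simpa using ht
  rcases t.eq_empty_or_nonempty with rfl | ⟨z, hz⟩
  · simpa using hs
  have hs1 : #s ≤ 1 := card_le_one.2 fun u hu v hv => (h u hu z hz).trans (h v hv z hz).symm
  have ht1 : #t ≤ 1 := card_le_one.2 fun u hu v hv => (h y hy u hu).symm.trans (h y hy v hv)
  omega

variable {α : Type*} {H : Finset (Finset α)} {V : Fin 8 ↪ α}

/-- `V` labels eight vertices of `H` so that `A`, `B`, `C`, `D` are edges, every edge avoiding `A`
contains `b` and every edge avoiding `B` contains `a`. -/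
structure IsFrame (H : Finset (Finset α)) (V : Fin 8 ↪ α) : Prop where
  edgeA_mem : edgeA.map V ∈ H
  edgeB_mem : edgeB.map V ∈ H
  edgeC_mem : edgeC.map V ∈ H
  edgeD_mem : edgeD.map V ∈ H
  mem_of_disjoint_edgeA : ∀ F ∈ H, Disjoint F (edgeA.map V) → V 3 ∈ F
  mem_of_disjoint_edgeB : ∀ F ∈ H, Disjoint F (edgeB.map V) → V 0 ∈ F

namespace IsFrame

theorem isTrace_edgeTrace (hV : IsFrame H V) (hM : NoThreeDisjoint H) {F : Finset α}
    (hF : F ∈ H) : IsTrace (edgeTrace V F) := by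
  have not_disjoint_union {S T : Finset (Fin 8)} (hS : S.map V ∈ H) (hT : T.map V ∈ H)
      (hST : Disjoint S T) : ¬ Disjoint (edgeTrace V F) (S ∪ T) := by
    rw [disjoint_union_right, disjoint_edgeTrace_iff, disjoint_edgeTrace_iff]
    exact fun h => hM hF hS hT h.1 h.2 ((disjoint_map V).2 hST)
  refine ⟨not_disjoint_union hV.edgeA_mem hV.edgeB_mem (by decide),
    not_disjoint_union hV.edgeC_mem hV.edgeD_mem (by decide), fun h => ?_, fun h => ?_⟩
  · exact mem_edgeTrace.2 (hV.mem_of_disjoint_edgeA F hF (disjoint_edgeTrace_iff.1 h))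
  · exact mem_edgeTrace.2 (hV.mem_of_disjoint_edgeB F hF (disjoint_edgeTrace_iff.1 h))

theorem card_le_card_edgeTrace_add_one (hV : IsFrame H V) (hM : NoThreeDisjoint H)
    (h3 : ∀ F ∈ H, #F = 3) : ∀ F ∈ H, #F ≤ #(edgeTrace V F) + 1 := fun F hF => by
  have := (hV.isTrace_edgeTrace hM hF).two_le_card
  have := h3 F hF
  omega

theorem innerEdges_subset_traces (hV : IsFrame H V) (hM : NoThreeDisjoint H)
    (h3 : ∀ F ∈ H, #F = 3) : innerEdges H V ⊆ traces 3 := fun T hT => by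
  rw [mem_innerEdges] at hT
  exact mem_traces.2 ⟨by simpa using h3 _ hT, by simpa using hV.isTrace_edgeTrace hM hT⟩

theorem innerEdges_meeting_subset (hV : IsFrame H V) (hM : NoThreeDisjoint H)
    (h3 : ∀ F ∈ H, #F = 3) (e : Finset (Fin 8)) :
    {T ∈ innerEdges H V | ¬ Disjoint T e} ⊆ triplesMeeting e :=
  filter_subset_filter _ (hV.innerEdges_subset_traces hM h3)

section OuterLink

variable [DecidableEq α]

theorem mem_traces_two (hV : IsFrame H V) (hM : NoThreeDisjoint H) (h3 : ∀ F ∈ H, #F = 3)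
    {e : Finset (Fin 8)} {z : α} (hz : z ∈ outerLink H V e) : e ∈ traces 2 := by
  obtain ⟨hzV, hzH⟩ := mem_outerLink.1 hz
  have htrace : edgeTrace V (insert z (e.map V)) = e := by
    ext i
    simp only [mem_edgeTrace, mem_insert, mem_map', or_iff_right_iff_imp]
    exact fun hi => (hzV ⟨i, hi⟩).elim
  have hcard := h3 _ hzH
  rw [card_insert_of_notMem (notMem_map_of_notMem_range hzV e), card_map] at hcard
  exact mem_traces.2 ⟨by omega, htrace ▸ hV.isTrace_edgeTrace hM hzH⟩

theorem card_le (hV : IsFrame H V) (hM : NoThreeDisjoint H) (h3 : ∀ F ∈ H, #F = 3) :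
    #H ≤ #(innerEdges H V) + ∑ e ∈ traces 2, #(outerLink H V e) :=
  card_le_card_innerEdges_add_sum_outerLink (hV.card_le_card_edgeTrace_add_one hM h3)
    fun F hF hcard => mem_traces.2
      ⟨by have := h3 F hF; omega, hV.isTrace_edgeTrace hM hF⟩

theorem card_outerLink_le_two (hV : IsFrame H V) (hM : NoThreeDisjoint H)
    (h3 : ∀ F ∈ H, #F = 3) (hR : HasDisjointPairAvoiding 2 H) :
    ∀ e ∈ traces 2, #(outerLink H V e) ≤ 2 := fun _ he =>
  card_outerLink_le_two_of_card_le hM hR (hV.card_le_card_edgeTrace_add_one hM h3)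
    (mem_traces.1 he).1.le

theorem sum_outerLink_le_eighteen (hV : IsFrame H V) (hM : NoThreeDisjoint H)
    (h3 : ∀ F ∈ H, #F = 3) (hR : HasDisjointPairAvoiding 2 H) :
    ∑ e ∈ traces 2, #(outerLink H V e) ≤ 18 := by
  have hle := hV.card_outerLink_le_two hM h3 hR
  have conflict {T e f : Finset (Fin 8)} (hT : T ∈ innerEdges H V) (he : e ∈ traces 2)
      (hf : f ∈ traces 2) (hef : Disjoint e f) (hTef : Disjoint T (e ∪ f)) :
      #(outerLink H V e) + #(outerLink H V f) ≤ 2 := by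
    rw [disjoint_union_right] at hTef
    exact card_add_card_le_two_of_forall_eq (hle e he) (hle f hf) fun y hy z hz =>
      eq_of_mem_outerLink_of_disjoint hM hT hTef.1 hTef.2 hef hy hz
  refine sum_traces_two_le_eighteen hle fun e he f hf hef hCD => ?_
  rcases hCD with hC | hD
  · exact conflict (mem_innerEdges.2 hV.edgeC_mem) he hf hef hC
  · exact conflict (mem_innerEdges.2 hV.edgeD_mem) he hf hef hD

theorem card_innerEdges_le_ten_add (hV : IsFrame H V) (hM : NoThreeDisjoint H)
    (h3 : ∀ F ∈ H, #F = 3) {e : Finset (Fin 8)} (he : (outerLink H V e).Nonempty) :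
    #(innerEdges H V) ≤ 10 + #{T ∈ innerEdges H V | ¬ Disjoint T e} := by
  obtain ⟨z, hz⟩ := he
  have hcard : #eᶜ = 6 := by
    rw [card_compl, Fintype.card_fin, (mem_traces.1 (hV.mem_traces_two hM h3 hz)).1]
  have hsub : {T ∈ innerEdges H V | Disjoint T e} ⊆ powersetCard 3 eᶜ := fun T hT => by
    rw [mem_filter] at hT
    exact mem_powersetCard.2 ⟨subset_compl_iff_disjoint_right.2 hT.2,
      (mem_traces.1 (hV.innerEdges_subset_traces hM h3 hT.1)).1⟩
  have hten : #{T ∈ innerEdges H V | Disjoint T e} ≤ 10 := by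
    refine (card_le_choose_of_intersecting hsub ?_ (by omega)).trans (by rw [hcard]; decide)
    rw [coe_filter]
    exact intersecting_innerEdges_disjoint hM ⟨z, hz⟩
  rw [← card_filter_add_card_filter_not (s := innerEdges H V) (Disjoint · e)]
  gcongr

theorem card_innerEdges_le_forty (hV : IsFrame H V) (hM : NoThreeDisjoint H)
    (h3 : ∀ F ∈ H, #F = 3) {e : Finset (Fin 8)} (he : e ∈ sparsePairs)
    (hne : (outerLink H V e).Nonempty) : #(innerEdges H V) ≤ 40 := by
  have := hV.card_innerEdges_le_ten_add hM h3 hne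
  have := card_le_card (hV.innerEdges_meeting_subset hM h3 e)
  have := (mem_filter.1 he).2
  omega

-- Adding to `m` either of the two labels outside `m ∪ p ∪ q` gives a triple avoiding `p` and `q`.
theorem card_innerEdges_le_thirtyEight (hV : IsFrame H V) (hM : NoThreeDisjoint H)
    (h3 : ∀ F ∈ H, #F = 3) {m p q : Finset (Fin 8)} (hm : m ∈ sparsePairs)
    (hne : (outerLink H V m).Nonempty) (hp : #p = 2) (hq : #q = 2)
    (hmp : Disjoint m p) (hmq : Disjoint m q)
    (hpq : ∀ T ∈ innerEdges H V, Disjoint T p → ¬ Disjoint T q) : #(innerEdges H V) ≤ 38 := by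
  obtain ⟨hmtr, hm30⟩ := mem_filter.1 hm
  obtain ⟨hm2, hmTrace⟩ := mem_traces.1 hmtr
  set X : Finset (Finset (Fin 8)) := (m ∪ p ∪ q)ᶜ.image (insert · m) with hX
  have hXcard : 2 ≤ #X := by
    have hsub : (m ∪ p ∪ q)ᶜ ⊆ mᶜ :=
      compl_subset_compl.2 (subset_union_left.trans subset_union_left)
    rw [hX, card_image_of_injOn (m.insert_inj_on'.mono (coe_subset.2 hsub)), card_compl,
      Fintype.card_fin]
    have := card_union_le (m ∪ p) q
    have := card_union_le m p
    omega
  have hXsub : X ⊆ triplesMeeting m := image_subset_iff.2 fun w hw => by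
    simp only [mem_compl, mem_union, not_or] at hw
    have hcard : #(insert w m) = 3 := by rw [card_insert_of_notMem hw.1.1, hm2]
    refine mem_filter.2 ⟨mem_traces.2 ⟨hcard, hmTrace.mono (subset_insert w m)⟩, fun h => ?_⟩
    have := disjoint_self.1 (h.mono_left (subset_insert w m))
    simp_all
  have hsub : {T ∈ innerEdges H V | ¬ Disjoint T m} ⊆ triplesMeeting m \ X := by
    refine subset_sdiff.2 ⟨hV.innerEdges_meeting_subset hM h3 m, disjoint_right.2 fun T hT => ?_⟩
    obtain ⟨w, hw, rfl⟩ := mem_image.1 hT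
    simp only [mem_compl, mem_union, not_or] at hw
    exact fun h => hpq _ (mem_filter.1 h).1 (disjoint_insert_left.2 ⟨hw.1.2, hmp⟩)
      (disjoint_insert_left.2 ⟨hw.2, hmq⟩)
  have hmeet := card_le_card hsub
  rw [card_sdiff_of_subset hXsub] at hmeet
  have := hV.card_innerEdges_le_ten_add hM h3 hne
  omega

theorem card_innerEdges_le_thirtyEight_of_one_lt (hV : IsFrame H V) (hM : NoThreeDisjoint H)
    (h3 : ∀ F ∈ H, #F = 3) (hR : HasDisjointPairAvoiding 2 H) {e : Finset (Fin 8)}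
    (he : 1 < #(outerLink H V e)) : #(innerEdges H V) ≤ 38 := by
  obtain ⟨x, hxe, y, hye, hxy⟩ := one_lt_card.1 he
  have hetr := hV.mem_traces_two hM h3 hxe
  have he2 := (mem_traces.1 hetr).1
  obtain ⟨f, g, hxf, hyg, hef, heg, hfg⟩ := exists_disjoint_edgeTraces_of_mem_outerLink hM hR
    (hV.card_le_card_edgeTrace_add_one hM h3) he2.le hxe hye hxy
  have hftr := hV.mem_traces_two hM h3 hxf
  have hgtr := hV.mem_traces_two hM h3 hyg
  have hf2 := (mem_traces.1 hftr).1
  have hg2 := (mem_traces.1 hgtr).1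
  have not_avoiding {p q : Finset (Fin 8)} (hp : x ∈ outerLink H V p) (hq : y ∈ outerLink H V q)
      (hpq : Disjoint p q) : ∀ T ∈ innerEdges H V, Disjoint T p → ¬ Disjoint T q :=
    fun T hT hTp hTq => hxy (eq_of_mem_outerLink_of_disjoint hM hT hTp hTq hpq hp hq)
  rcases mem_sparsePairs_of_pairwise_disjoint hetr hftr hgtr hef heg hfg with hs | hs | hs
  · exact hV.card_innerEdges_le_thirtyEight hM h3 hs ⟨x, hxe⟩ hf2 hg2 hef heg
      (not_avoiding hxf hyg hfg)
  · exact hV.card_innerEdges_le_thirtyEight hM h3 hs ⟨x, hxf⟩ he2 hg2 hef.symm hfg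
      (not_avoiding hxe hyg heg)
  · exact hV.card_innerEdges_le_thirtyEight hM h3 hs ⟨y, hyg⟩ hf2 he2 hfg.symm heg.symm
      (not_avoiding hxf hye hef.symm)

theorem card_le_fiftySix_of_outerLink_le_one (hV : IsFrame H V) (hM : NoThreeDisjoint H)
    (h3 : ∀ F ∈ H, #F = 3) (h1 : ∀ e, #(outerLink H V e) ≤ 1) : #H ≤ 56 := by
  have hH := hV.card_le hM h3
  by_cases hs : ∃ e ∈ sparsePairs, (outerLink H V e).Nonempty
  · obtain ⟨e, he, hne⟩ := hs
    have hsum : ∑ e ∈ traces 2, #(outerLink H V e) ≤ #(traces 2) • 1 :=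
      sum_le_card_nsmul _ _ _ fun e _ => h1 e
    rw [card_traces_two, smul_eq_mul] at hsum
    have := hV.card_innerEdges_le_forty hM h3 he hne
    omega
  · push Not at hs
    have hsparse : ∑ e ∈ sparsePairs, #(outerLink H V e) = 0 :=
      sum_eq_zero fun e he => card_eq_zero.2 (hs e he)
    have hother : ∑ e ∈ traces 2 \ sparsePairs, #(outerLink H V e) ≤
        #(traces 2 \ sparsePairs) • 1 := sum_le_card_nsmul _ _ _ fun e _ => h1 e
    rw [card_traces_two_sdiff_sparsePairs, smul_eq_mul] at hother
    have hsub : sparsePairs ⊆ traces 2 := filter_subset _ _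
    rw [← sum_sdiff hsub] at hH
    have := card_le_card (hV.innerEdges_subset_traces hM h3)
    rw [card_traces_three] at this
    omega

end OuterLink

theorem card_le_fiftySix (hV : IsFrame H V) (hM : NoThreeDisjoint H) (h3 : ∀ F ∈ H, #F = 3)
    (hR : HasDisjointPairAvoiding 2 H) : #H ≤ 56 := by
  classical
  by_cases hdouble : ∃ e, 1 < #(outerLink H V e)
  · obtain ⟨e, he⟩ := hdouble
    have := hV.card_innerEdges_le_thirtyEight_of_one_lt hM h3 hR he
    have := hV.sum_outerLink_le_eighteen hM h3 hR
    have := hV.card_le hM h3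
    omega
  · push Not at hdouble
    exact hV.card_le_fiftySix_of_outerLink_le_one hM h3 hdouble

end IsFrame

theorem eq_insert_insert_singleton_of_card_eq_three [DecidableEq α] {F : Finset α} {x y z : α}
    (hF : #F = 3) (hx : x ∈ F) (hy : y ∈ F) (hz : z ∈ F) (hxy : x ≠ y) (hxz : x ≠ z)
    (hyz : y ≠ z) : F = {x, y, z} := by
  refine (eq_of_subset_of_card_le ?_ ?_).symm
  · simp [insert_subset_iff, hx, hy, hz]
  · rw [hF, card_eq_three.2 ⟨x, y, z, hxy, hxz, hyz, rfl⟩]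

theorem exists_eq_insert_insert_singleton_of_card_eq_three [DecidableEq α] {F : Finset α} {x y : α}
    (hF : #F = 3) (hx : x ∈ F) (hy : y ∈ F) (hxy : x ≠ y) :
    ∃ z, z ≠ x ∧ z ≠ y ∧ F = {x, y, z} := by
  obtain ⟨z, hz, hzxy⟩ := exists_mem_notMem_of_card_lt_card
    (show #{x, y} < #F by rw [hF, card_pair hxy]; omega)
  simp only [mem_insert, mem_singleton, not_or] at hzxy
  exact ⟨z, hzxy.1, hzxy.2, eq_insert_insert_singleton_of_card_eq_three hF hx hy hz hxy
    (Ne.symm hzxy.1) (Ne.symm hzxy.2)⟩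

theorem exists_embedding_of_nodup [DecidableEq α] {a a₁ a₂ b b₁ b₂ x y : α}
    (h : [a, a₁, a₂, b, b₁, b₂, x, y].Nodup) :
    ∃ V : Fin 8 ↪ α, V 0 = a ∧ V 3 = b ∧ edgeA.map V = {a, a₁, a₂} ∧
      edgeB.map V = {b, b₁, b₂} ∧ edgeC.map V = {a₁, b₁, x} ∧ edgeD.map V = {a₂, b₂, y} := by
  have hinj : Function.Injective ![a, a₁, a₂, b, b₁, b₂, x, y] := List.nodup_ofFn.1 h
  refine ⟨⟨_, hinj⟩, rfl, rfl, ?_, ?_, ?_, ?_⟩ <;> simp [map_insert]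

theorem exists_isFrame (h3 : ∀ F ∈ H, #F = 3) (hR : HasDisjointPairAvoiding 2 H)
    {A B : Finset α} (hA : A ∈ H) (hB : B ∈ H) (hAB : Disjoint A B)
    (hstarA : ∃ b, ∀ F ∈ H, Disjoint F A → b ∈ F)
    (hstarB : ∃ a, ∀ F ∈ H, Disjoint F B → a ∈ F) : ∃ V, IsFrame H V := by
  classical
  obtain ⟨b, hb⟩ := hstarA
  obtain ⟨a, ha⟩ := hstarB
  have haA : a ∈ A := ha A hA hAB
  have hbB : b ∈ B := hb B hB hAB.symm
  obtain ⟨C, hC, D, hD, hCD, hCab, hDab⟩ := hR {a, b} card_le_two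
  have meets {F : Finset α} (hF : F ∈ H) (hFab : Disjoint F {a, b}) :
      a ∉ F ∧ b ∉ F ∧ (∃ p ∈ F, p ∈ A) ∧ ∃ q ∈ F, q ∈ B := by
    simp only [disjoint_insert_right, disjoint_singleton_right] at hFab
    exact ⟨hFab.1, hFab.2, not_disjoint_iff.1 fun h => hFab.2 (hb F hF h),
      not_disjoint_iff.1 fun h => hFab.1 (ha F hF h)⟩
  obtain ⟨haC, hbC, ⟨a₁, ha₁C, ha₁A⟩, b₁, hb₁C, hb₁B⟩ := meets hC hCab
  obtain ⟨haD, hbD, ⟨a₂, ha₂D, ha₂A⟩, b₂, hb₂D, hb₂B⟩ := meets hD hDab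
  have hAeq : A = {a, a₁, a₂} := eq_insert_insert_singleton_of_card_eq_three (h3 A hA) haA ha₁A ha₂A
    (ne_of_mem_of_not_mem ha₁C haC).symm (ne_of_mem_of_not_mem ha₂D haD).symm
    (disjoint_left.1 hCD ha₁C <| · ▸ ha₂D)
  have hBeq : B = {b, b₁, b₂} := eq_insert_insert_singleton_of_card_eq_three (h3 B hB) hbB hb₁B hb₂B
    (ne_of_mem_of_not_mem hb₁C hbC).symm (ne_of_mem_of_not_mem hb₂D hbD).symm
    (disjoint_left.1 hCD hb₁C <| · ▸ hb₂D)
  obtain ⟨x, hxa, hxb, hCeq⟩ := exists_eq_insert_insert_singleton_of_card_eq_three (h3 C hC)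
    ha₁C hb₁C (disjoint_left.1 hAB ha₁A <| · ▸ hb₁B)
  obtain ⟨y, hya, hyb, hDeq⟩ := exists_eq_insert_insert_singleton_of_card_eq_three (h3 D hD)
    ha₂D hb₂D (disjoint_left.1 hAB ha₂A <| · ▸ hb₂B)
  subst hAeq hBeq hCeq hDeq
  have hnodup : [a, a₁, a₂, b, b₁, b₂, x, y].Nodup := by
    simp only [disjoint_insert_right, mem_insert, mem_singleton, not_or,
      disjoint_singleton_right, List.nodup_cons, List.mem_cons, List.not_mem_nil, or_false,
      not_false_eq_true, List.nodup_nil, and_self, and_true] at hAB hCD haC hbC haD hbD ⊢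
    grind
  obtain ⟨V, hV0, hV3, hVA, hVB, hVC, hVD⟩ := exists_embedding_of_nodup hnodup
  exact ⟨V, hVA ▸ hA, hVB ▸ hB, hVC ▸ hC, hVD ▸ hD, by rwa [hVA, hV3], by rwa [hVB, hV0]⟩

end Frame

theorem stmt14_general {α : Type*} {H : Finset (Finset α)} (h3 : ∀ F ∈ H, #F = 3)
    (hM : NoThreeDisjoint H) (hR : HasDisjointPairAvoiding 2 H)
    {A B : Finset α} (hA : A ∈ H) (hB : B ∈ H) (hAB : Disjoint A B)
    (hstarA : ∃ b, ∀ F ∈ H, Disjoint F A → b ∈ F)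
    (hstarB : ∃ a, ∀ F ∈ H, Disjoint F B → a ∈ F) : #H ≤ 56 := by
  obtain ⟨V, hV⟩ := exists_isFrame h3 hR hA hB hAB hstarA hstarB
  exact hV.card_le_fiftySix hM h3 hR

/-- If a 2-resilient 3-graph `H` with matching number 2 has
disjoint edges `A, B` such that both families of edges avoiding `A`,
respectively `B`, are stars, then `|H| ≤ 56`. -/
theorem stmt14 (n : ℕ) (H : Finset (Finset ℕ))
    (hH : H ⊆ (Finset.range n).powersetCard 3)
    (hres : Resilient 2 H) (hν : matchingNumber H = 2)
    (A B : Finset ℕ) (hA : A ∈ H) (hB : B ∈ H) (hAB : Disjoint A B)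
    (hstarA : ∃ a : ℕ, ∀ F ∈ H, Disjoint F A → a ∈ F)
    (hstarB : ∃ b : ℕ, ∀ F ∈ H, Disjoint F B → b ∈ F) :
    H.card ≤ 56 := by
  have h3 : ∀ F ∈ H, #F = 3 := fun F hF => (mem_powersetCard.1 (hH hF)).2
  exact stmt14_general h3
    (noThreeDisjoint_of_matchingNumber_le_two (fun h0 => by simpa using h3 ∅ h0) hν.le)
    (hres.hasDisjointPairAvoiding hν.ge) hA hB hAB hstarA hstarB
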